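/- For every stable weighted graph (G,w) of genus g ≥ 2 there exists a stable weighted graph (G',w') of genus g having exactly 3g − 3 edges, together with a weighted contraction (G',w') → (G,w), i.e., (G,w) is obtained from (G',w') by contracting finitely many edges. -/

import Mathlib

/-- A finite multigraph: finite vertex and edge types, each edge carrying a source and a
target vertex (this is an auxiliary orientation); loops and parallel edges are allowed. -/
structure Multigraph where
  V : Type
  E : Type
  [fV : Fintype V]
  [fE : Fintype E]
  [dV : DecidableEq V]
  [dE : DecidableEq E]
  s : E → V
  t : E → V

attribute [instance] Multigraph.fV Multigraph.fE Multigraph.dV Multigraph.dE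

namespace Multigraph

variable (G : Multigraph)

/-- Two vertices are adjacent if some edge joins them. -/
def Adj (a b : G.V) : Prop :=
  ∃ e : G.E, (G.s e = a ∧ G.t e = b) ∨ (G.s e = b ∧ G.t e = a)

/-- A multigraph is connected if it is nonempty and any two vertices are joined by a walk. -/
def Connected : Prop :=
  Nonempty G.V ∧ ∀ a b : G.V, Relation.ReflTransGen G.Adj a b

/-- The graph obtained by deleting the edges in `F` is connected. -/
def ConnectedAvoiding (F : Set G.E) : Prop :=
  ∀ a b : G.V, Relation.ReflTransGen
    (fun x y => ∃ e : G.E, e ∉ F ∧ ((G.s e = x ∧ G.t e = y) ∨ (G.s e = y ∧ G.t e = x))) a b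

/-- The valency of a vertex: the number of half-edges at it (a loop counts twice). -/
def val (v : G.V) : ℕ :=
  (Finset.univ.filter (fun e => G.s e = v)).card + (Finset.univ.filter (fun e => G.t e = v)).card

/-- The number of loops based at a vertex. -/
def loops (v : G.V) : ℕ :=
  (Finset.univ.filter (fun e => G.s e = v ∧ G.t e = v)).card

/-- The number of edges joining two vertices. -/
def edgesBetween (v w : G.V) : ℕ :=
  (Finset.univ.filter (fun e => (G.s e = v ∧ G.t e = w) ∨ (G.s e = w ∧ G.t e = v))).card

/-- The first Betti number `b₁(G) = |E| - |V| + 1` (of a connected graph). -/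
def b1 : ℤ := (Fintype.card G.E : ℤ) - (Fintype.card G.V : ℤ) + 1

/-- The boundary map `∂ : C₁(G,ℤ) → C₀(G,ℤ)`, sending an edge `e` to `t e - s e`. -/
def boundaryHom : (G.E → ℤ) →+ (G.V → ℤ) where
  toFun c := fun v =>
    ∑ e : G.E, c e * ((if G.t e = v then 1 else 0) - (if G.s e = v then 1 else 0))
  map_zero' := by funext v; simp
  map_add' a b := by
    funext v
    simp [Pi.add_apply, add_mul, Finset.sum_add_distrib]

/-- The coboundary map `δ : C₀(G,ℤ) → C₁(G,ℤ)`. -/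
def coboundaryHom : (G.V → ℤ) →+ (G.E → ℤ) where
  toFun f := fun e => f (G.t e) - f (G.s e)
  map_zero' := by funext e; simp
  map_add' a b := by funext e; simp only [Pi.add_apply]; ring

/-- The cycle space `H₁(G,ℤ)`, i.e. the kernel of the boundary map. -/
def cycleSpace : AddSubgroup (G.E → ℤ) := (G.boundaryHom).ker

/-- `C` is the edge set of a closed walk with no repeated vertices except the
initial/terminal one (so a loop is a cycle). -/
def IsCycle (C : Finset G.E) : Prop :=
  ∃ n : ℕ, 0 < n ∧ ∃ (e : Fin n → G.E) (v : Fin (n + 1) → G.V),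
    Function.Injective e ∧
    (∀ i : Fin n, (G.s (e i) = v i.castSucc ∧ G.t (e i) = v i.succ) ∨
        (G.s (e i) = v i.succ ∧ G.t (e i) = v i.castSucc)) ∧
    v 0 = v (Fin.last n) ∧
    (∀ i j : Fin (n + 1), v i = v j →
        i = j ∨ (i = 0 ∧ j = Fin.last n) ∨ (i = Fin.last n ∧ j = 0)) ∧
    C = Finset.image e Finset.univ

/-- A bridge (separating edge) is an edge contained in no cycle. -/
def IsBridge (e : G.E) : Prop := ∀ C : Finset G.E, G.IsCycle C → e ∉ C

def Bridgeless : Prop := ∀ e : G.E, ¬ G.IsBridge e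

/-- `e₁ ∼ e₂` iff every cycle containing `e₁` contains `e₂` and conversely. -/
def Sim (e₁ e₂ : G.E) : Prop :=
  ∀ C : Finset G.E, G.IsCycle C → (e₁ ∈ C ↔ e₂ ∈ C)

/-- The C1-sets: the equivalence classes of the relation `Sim`. -/
def IsC1Set (S : Set G.E) : Prop := ∃ e : G.E, S = {e' | G.Sim e e'}

/-- The multigraph obtained by contracting every edge in `F` (a contracted loop is
simply deleted). -/
noncomputable def contractSet (F : Set G.E) : Multigraph :=
  letI : DecidableEq (Quot (fun a b : G.V => ∃ e ∈ F, G.s e = a ∧ G.t e = b)) :=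
    Classical.decEq _
  { V := Quot (fun a b : G.V => ∃ e ∈ F, G.s e = a ∧ G.t e = b)
    E := {e : G.E // e ∉ F}
    fV := Fintype.ofSurjective (Quot.mk _) (fun q => Quot.exists_rep q)
    fE := Fintype.ofInjective (Subtype.val) Subtype.val_injective
    dV := inferInstance
    dE := inferInstance
    s := fun e => Quot.mk _ (G.s e.1)
    t := fun e => Quot.mk _ (G.t e.1) }

/-- `G^(2)`: the multigraph obtained from `G` by contracting every bridge. -/
noncomputable def contractBridges : Multigraph := G.contractSet {e | G.IsBridge e}

/-- An isomorphism of multigraphs. -/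
structure Iso (G₁ G₂ : Multigraph) where
  vEquiv : G₁.V ≃ G₂.V
  eEquiv : G₁.E ≃ G₂.E
  endpoints : ∀ e : G₁.E,
    (G₂.s (eEquiv e) = vEquiv (G₁.s e) ∧ G₂.t (eEquiv e) = vEquiv (G₁.t e)) ∨
    (G₂.s (eEquiv e) = vEquiv (G₁.t e) ∧ G₂.t (eEquiv e) = vEquiv (G₁.s e))

/-- The group of degree-zero divisors `Div⁰(G)`. -/
def Div0 : AddSubgroup (G.V → ℤ) where
  carrier := {D : G.V → ℤ | ∑ v : G.V, D v = 0}
  zero_mem' := by simp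
  add_mem' := by
    intro a b ha hb
    simp only [Set.mem_setOf_eq, Pi.add_apply] at *
    simp [Finset.sum_add_distrib, ha, hb]
  neg_mem' := by
    intro a ha
    simp only [Set.mem_setOf_eq, Pi.neg_apply] at *
    simp [ha]

/-- The principal divisor `div(f_v)` associated to a vertex `v`. -/
def prinDiv (v : G.V) : G.V → ℤ :=
  fun u => if u = v then 2 * (G.loops v : ℤ) - (G.val v : ℤ) else (G.edgesBetween v u : ℤ)

/-- The group of principal divisors `Prin(G)`. -/
def Prin : AddSubgroup (G.V → ℤ) := AddSubgroup.closure (Set.range G.prinDiv)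

end Multigraph

/-- `Jac(G₁) ≅ Jac(G₂)`: a ℤ-linear isomorphism of the cycle lattices preserving the
bilinear forms for which the edges are orthonormal. -/
def JacIsoGraph (G₁ G₂ : Multigraph) : Prop :=
  ∃ φ : G₁.cycleSpace ≃+ G₂.cycleSpace,
    ∀ x y : G₁.cycleSpace,
      (∑ e : G₂.E, ((φ x : G₂.E → ℤ) e) * ((φ y : G₂.E → ℤ) e)) =
      ∑ e : G₁.E, ((x : G₁.E → ℤ) e) * ((y : G₁.E → ℤ) e)

/-- Cyclic equivalence of two multigraphs: a bijection of the edge sets, together with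
signs, inducing an isomorphism of the cycle spaces. -/
def CyclicallyEquivalent (G₁ G₂ : Multigraph) : Prop :=
  ∃ (σ : G₁.E ≃ G₂.E) (ε : G₁.E → ℤ),
    (∀ e, ε e = 1 ∨ ε e = -1) ∧
    ((fun x : G₁.E → ℤ => fun e₂ : G₂.E => ε (σ.symm e₂) * x (σ.symm e₂)) ''
        (G₁.cycleSpace : Set (G₁.E → ℤ))) = (G₂.cycleSpace : Set (G₂.E → ℤ))

/-- Cyclic equivalence of metric graphs: as for graphs, with a length-preserving bijection
of the edge sets. -/
def MetricCycEquiv (G₁ : Multigraph) (ℓ₁ : G₁.E → ℝ) (G₂ : Multigraph) (ℓ₂ : G₂.E → ℝ) : Prop :=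
  ∃ (σ : G₁.E ≃ G₂.E) (ε : G₁.E → ℤ),
    (∀ e, ℓ₂ (σ e) = ℓ₁ e) ∧
    (∀ e, ε e = 1 ∨ ε e = -1) ∧
    ((fun x : G₁.E → ℤ => fun e₂ : G₂.E => ε (σ.symm e₂) * x (σ.symm e₂)) ''
        (G₁.cycleSpace : Set (G₁.E → ℤ))) = (G₂.cycleSpace : Set (G₂.E → ℤ))

/-- `c` chooses one representative edge in each C1-set (i.e. in each `Sim`-class). -/
def IsC1Choice (H : Multigraph) (c : H.E → H.E) : Prop :=
  (∀ e, H.Sim e (c e)) ∧ ∀ e e' : H.E, H.Sim e e' → c e = c e'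

/-- The graph `G^(3)` obtained by contracting, in each C1-set, all edges except the
chosen one. -/
noncomputable def threeGraph (H : Multigraph) (c : H.E → H.E) : Multigraph :=
  H.contractSet {e | c e ≠ e}

/-- The length function on `G^(3)`: a surviving edge gets the total length of its C1-set. -/
noncomputable def threeLength (H : Multigraph) (ℓ : H.E → ℝ) (c : H.E → H.E) :
    (threeGraph H c).E → ℝ :=
  fun e => ∑ e' ∈ Finset.univ.filter (fun e' => c e' = e.1), ℓ e'

/-- A weighted graph: a multigraph with a weight function on the vertices. -/
structure WeightedGraph where
  G : Multigraph
  w : G.V → ℕ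

namespace WeightedGraph

/-- The genus `g(G,w) = b₁(G) + Σ_v w(v)`. -/
def genus (X : WeightedGraph) : ℤ := X.G.b1 + ∑ v : X.G.V, (X.w v : ℤ)

/-- A weighted graph is stable if it is connected, has genus at least 2, and every
vertex of weight zero has valency at least 3. -/
def Stable (X : WeightedGraph) : Prop :=
  X.G.Connected ∧ 2 ≤ X.genus ∧ ∀ v : X.G.V, X.w v = 0 → 3 ≤ X.G.val v

/-- An isomorphism of weighted graphs. -/
structure Iso (X Y : WeightedGraph) where
  vEquiv : X.G.V ≃ Y.G.V
  eEquiv : X.G.E ≃ Y.G.E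
  endpoints : ∀ e : X.G.E,
    (Y.G.s (eEquiv e) = vEquiv (X.G.s e) ∧ Y.G.t (eEquiv e) = vEquiv (X.G.t e)) ∨
    (Y.G.s (eEquiv e) = vEquiv (X.G.t e) ∧ Y.G.t (eEquiv e) = vEquiv (X.G.s e))
  weight_eq : ∀ v : X.G.V, Y.w (vEquiv v) = X.w v

/-- Contraction of a single edge of a weighted graph: a non-loop edge is contracted by
identifying its two endpoints, the new vertex receiving the sum of the two weights;
a loop is deleted, the weight of its base vertex increasing by 1. -/
noncomputable def contract (X : WeightedGraph) (e₀ : X.G.E) : WeightedGraph :=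
  letI : DecidableEq (Quot (fun a b : X.G.V => a = X.G.s e₀ ∧ b = X.G.t e₀)) :=
    Classical.decEq _
  { G := { V := Quot (fun a b : X.G.V => a = X.G.s e₀ ∧ b = X.G.t e₀)
           E := {e : X.G.E // e ≠ e₀}
           fV := Fintype.ofSurjective (Quot.mk _) (fun q => Quot.exists_rep q)
           fE := inferInstance
           dV := inferInstance
           dE := inferInstance
           s := fun e => Quot.mk _ (X.G.s e.1)
           t := fun e => Quot.mk _ (X.G.t e.1) }
    w := fun q =>
      (∑ v ∈ Finset.univ.filter
          (fun v => Quot.mk (fun a b : X.G.V => a = X.G.s e₀ ∧ b = X.G.t e₀) v = q), X.w v) +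
      (if X.G.s e₀ = X.G.t e₀ ∧
          Quot.mk (fun a b : X.G.V => a = X.G.s e₀ ∧ b = X.G.t e₀) (X.G.s e₀) = q
       then 1 else 0) }

/-- One step: `Y` is (isomorphic to) the contraction of a single edge of `X`. -/
def ContractStep (X Y : WeightedGraph) : Prop :=
  ∃ e : X.G.E, Nonempty ((X.contract e).Iso Y)

/-- `X.ContractsTo Y`: `Y` is obtained from `X` by contracting finitely many edges. -/
def ContractsTo : WeightedGraph → WeightedGraph → Prop :=
  Relation.ReflTransGen ContractStep

/-- A sequence of exactly `n` loop contractions from `X` ending at (a graph isomorphic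
to) `Y`. -/
def LoopContractSeq : ℕ → WeightedGraph → WeightedGraph → Prop
  | 0, X, Y => Nonempty (X.Iso Y)
  | n + 1, X, Y => ∃ e : X.G.E, X.G.s e = X.G.t e ∧ LoopContractSeq n (X.contract e) Y

/-- The weightless graph `G''` obtained by replacing each vertex `v` of positive weight
with a weight-zero vertex carrying `w v` new loops. -/
def blowUp (X : WeightedGraph) : WeightedGraph where
  G := { V := X.G.V
         E := X.G.E ⊕ (Σ v : X.G.V, Fin (X.w v))
         fV := inferInstance
         fE := inferInstance
         dV := inferInstance
         dE := inferInstance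
         s := Sum.elim X.G.s (fun p => p.1)
         t := Sum.elim X.G.t (fun p => p.1) }
  w := fun _ => 0

def totalWeight (X : WeightedGraph) : ℕ := ∑ v : X.G.V, X.w v

/-- The lattice `Λ = H₁(G,ℤ) ⊕ ℤ^(g - b₁(G))` underlying the Jacobian torus of a
weighted graph. -/
abbrev JacLattice (X : WeightedGraph) : Type :=
  ↥X.G.cycleSpace × (Fin X.totalWeight → ℤ)

/-- The bilinear form on the Jacobian lattice: on `H₁(G,ℤ)` the edges are orthonormal,
and the form vanishes on the extra summand. -/
def jacForm (X : WeightedGraph) (p q : X.JacLattice) : ℤ :=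
  ∑ e : X.G.E, (p.1 : X.G.E → ℤ) e * (q.1 : X.G.E → ℤ) e

end WeightedGraph

/-- A pure tropical curve: a multigraph with positive edge lengths. -/
structure PureTropicalCurve where
  G : Multigraph
  ℓ : G.E → ℝ
  pos : ∀ e, 0 < ℓ e

/-- A (weighted) tropical curve: a multigraph with vertex weights and positive edge
lengths. -/
structure TropicalCurve where
  G : Multigraph
  w : G.V → ℕ
  ℓ : G.E → ℝ
  pos : ∀ e, 0 < ℓ e

namespace TropicalCurve

def totalWeight (Γ : TropicalCurve) : ℕ := ∑ v : Γ.G.V, Γ.w v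

/-- The lattice `Λ = H₁(G,ℤ) ⊕ ℤ^(g - b₁(G))` underlying `Jac(Γ)`. -/
abbrev JacLattice (Γ : TropicalCurve) : Type :=
  ↥Γ.G.cycleSpace × (Fin Γ.totalWeight → ℤ)

/-- The bilinear form `( , )_ℓ` on the Jacobian lattice, vanishing on the extra
summand. -/
noncomputable def jacForm (Γ : TropicalCurve) (p q : Γ.JacLattice) : ℝ :=
  ∑ e : Γ.G.E, Γ.ℓ e * ((p.1 : Γ.G.E → ℤ) e : ℝ) * ((q.1 : Γ.G.E → ℤ) e : ℝ)

end TropicalCurve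

/-- `Jac(Γ₁) ≅ Jac(Γ₂)`: a ℤ-linear isomorphism of the lattices preserving the bilinear
forms. -/
def TropJacIso (Γ₁ Γ₂ : TropicalCurve) : Prop :=
  ∃ φ : Γ₁.JacLattice ≃+ Γ₂.JacLattice,
    ∀ p q : Γ₁.JacLattice, Γ₂.jacForm (φ p) (φ q) = Γ₁.jacForm p q

namespace Multigraph

/-- The endpoint map on half-edges: each edge has a source half and a target half. -/
def halfEnd (G : Multigraph) : G.E ⊕ G.E → G.V := Sum.elim G.s G.t

theorem val_eq_sum (G : Multigraph) (v : G.V) :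
    G.val v = (∑ e, if G.s e = v then 1 else 0) + ∑ e, if G.t e = v then 1 else 0 := by
  simp only [val, Finset.card_filter]

theorem val_eq_card_halfEnd (G : Multigraph) (v : G.V) :
    G.val v = (Finset.univ.filter fun h => G.halfEnd h = v).card := by
  rw [val_eq_sum, Finset.card_filter, Fintype.sum_sum_type]
  rfl

/-- The valency after adding an edge from `a` to `b`. -/
theorem val_option {V E : Type} [Fintype V] [Fintype E] [DecidableEq V] [DecidableEq E]
    (a b : V) (s t : E → V) (u : V) :
    val { V := V, E := Option E, s := fun e => e.elim a s, t := fun e => e.elim b t } u =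
      ((∑ e, if s e = u then 1 else 0) + ∑ e, if t e = u then 1 else 0) +
        ((if a = u then 1 else 0) + if b = u then 1 else 0) := by
  have h : (Finset.univ.filter fun e : Option E => e.elim a s = u).card +
      (Finset.univ.filter fun e : Option E => e.elim b t = u).card =
      ((∑ e, if s e = u then 1 else 0) + ∑ e, if t e = u then 1 else 0) +
        ((if a = u then 1 else 0) + if b = u then 1 else 0) := by
    rw [Finset.card_filter, Finset.card_filter, Fintype.sum_option, Fintype.sum_option,
      add_add_add_comm, add_comm]
    rfl
  exact h

/-- The handshake lemma. -/
theorem sum_val (G : Multigraph) : ∑ v, G.val v = 2 * Fintype.card G.E := by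
  simp only [val_eq_sum, Finset.sum_add_distrib]
  rw [Finset.sum_comm, Finset.sum_comm (f := fun v e => if G.t e = v then 1 else 0)]
  simp [two_mul]

theorem Adj.symm {G : Multigraph} {a b : G.V} (h : G.Adj a b) : G.Adj b a := by
  obtain ⟨e, he⟩ := h
  exact ⟨e, he.symm⟩

end Multigraph

namespace WeightedGraph

/-- A map of vertices identifying exactly the endpoints of `e₀`, compatible with endpoints and
weights, exhibits its target as the contraction of `e₀`. -/
theorem contractStep_of_collapse {X Y : WeightedGraph} (e₀ : Y.G.E) (π : Y.G.V → X.G.V)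
    (hsurj : Function.Surjective π)
    (hπ : ∀ a b, π a = π b →
      a = b ∨ (a = Y.G.s e₀ ∧ b = Y.G.t e₀) ∨ (b = Y.G.s e₀ ∧ a = Y.G.t e₀))
    (h₀ : π (Y.G.s e₀) = π (Y.G.t e₀)) (σ : {e : Y.G.E // e ≠ e₀} ≃ X.G.E)
    (hs : ∀ e, X.G.s (σ e) = π (Y.G.s e.1)) (ht : ∀ e, X.G.t (σ e) = π (Y.G.t e.1))
    (hw : ∀ v, X.w v = (∑ a ∈ Finset.univ.filter (fun a => π a = v), Y.w a) +
      if Y.G.s e₀ = Y.G.t e₀ ∧ π (Y.G.s e₀) = v then 1 else 0) :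
    Y.ContractStep X := by
  let r : Y.G.V → Y.G.V → Prop := fun a b => a = Y.G.s e₀ ∧ b = Y.G.t e₀
  have hr : ∀ a b, r a b → π a = π b := by
    rintro a b ⟨rfl, rfl⟩
    exact h₀
  have hmk : ∀ a b, π a = π b → Quot.mk r a = Quot.mk r b := by
    intro a b h
    rcases hπ a b h with rfl | h | h
    · rfl
    · exact Quot.sound (r := r) h
    · exact (Quot.sound (r := r) h).symm
  have hiff : ∀ a b, Quot.mk r a = Quot.mk r b ↔ π a = π b := fun a b =>
    ⟨fun h => congrArg (Quot.lift π hr) h, hmk a b⟩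
  have hbij : Function.Bijective (Quot.lift π hr) := by
    constructor
    · rintro ⟨a⟩ ⟨b⟩ h
      exact hmk a b h
    · intro v
      obtain ⟨a, rfl⟩ := hsurj v
      exact ⟨Quot.mk r a, rfl⟩
  refine ⟨e₀, ⟨⟨Equiv.ofBijective _ hbij, σ, fun e => Or.inl ⟨hs e, ht e⟩, ?_⟩⟩⟩
  rintro ⟨b⟩
  let : DecidableEq (Quot r) := Classical.decEq _
  change X.w (π b) = (∑ a ∈ Finset.univ.filter (fun a => Quot.mk r a = Quot.mk r b), Y.w a) +
    if Y.G.s e₀ = Y.G.t e₀ ∧ Quot.mk r (Y.G.s e₀) = Quot.mk r b then 1 else 0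
  rw [hw]
  simp only [hiff]

/-- The edges of `Option E` other than `none`. -/
def optionNeNoneEquiv (E : Type) : {e : Option E // e ≠ none} ≃ E where
  toFun e := e.1.get (Option.isSome_iff_ne_none.2 e.2)
  invFun e := ⟨some e, by simp⟩
  left_inv e := by simp
  right_inv e := by simp

/-- Trade one unit of weight at `v` for a loop at `v`. -/
abbrev addLoop (X : WeightedGraph) (v : X.G.V) : WeightedGraph where
  G := { V := X.G.V
         E := Option X.G.E
         s := fun e => e.elim v X.G.s
         t := fun e => e.elim v X.G.t }
  w := fun u => if u = v then X.w u - 1 else X.w u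

theorem card_addLoop_E (X : WeightedGraph) (v : X.G.V) :
    Fintype.card (X.addLoop v).G.E = Fintype.card X.G.E + 1 :=
  Fintype.card_option

theorem val_addLoop (X : WeightedGraph) (v u : X.G.V) :
    (X.addLoop v).G.val u = X.G.val u + if v = u then 2 else 0 := by
  refine (Multigraph.val_option v v X.G.s X.G.t u).trans ?_
  rw [← Multigraph.val_eq_sum]
  split_ifs <;> rfl

theorem addLoop_contractStep (X : WeightedGraph) (v : X.G.V) (hv : 0 < X.w v) :
    (X.addLoop v).ContractStep X := by
  refine contractStep_of_collapse (X := X) (Y := X.addLoop v) none id Function.surjective_id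
    (fun a b h => Or.inl h) rfl (optionNeNoneEquiv X.G.E) ?_ ?_ ?_
  · rintro ⟨_ | e, he⟩
    · exact absurd rfl he
    · rfl
  · rintro ⟨_ | e, he⟩
    · exact absurd rfl he
    · rfl
  · intro u
    change X.w u = (∑ a ∈ Finset.univ.filter (fun a : X.G.V => a = u),
      if a = v then X.w a - 1 else X.w a) + if v = v ∧ v = u then 1 else 0
    rw [Finset.filter_eq', if_pos (Finset.mem_univ u), Finset.sum_singleton]
    by_cases h : v = u
    · subst h
      simp only [if_true, and_self]
      omega
    · simp [h, Ne.symm h]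

theorem genus_addLoop (X : WeightedGraph) (v : X.G.V) (hv : 0 < X.w v) :
    (X.addLoop v).genus = X.genus := by
  have hsum : (∑ u : X.G.V, ((if u = v then X.w u - 1 else X.w u : ℕ) : ℤ)) =
      (∑ u, (X.w u : ℤ)) - 1 := by
    rw [eq_sub_iff_add_eq, ← Finset.add_sum_erase _ _ (Finset.mem_univ v),
      ← Finset.add_sum_erase _ (fun u => (X.w u : ℤ)) (Finset.mem_univ v)]
    rw [Finset.sum_congr rfl (g := fun u => (X.w u : ℤ))
      (fun u hu => by rw [if_neg (Finset.ne_of_mem_erase hu)])]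
    simp only [if_true]
    omega
  change ((Fintype.card (X.addLoop v).G.E : ℤ) - Fintype.card X.G.V + 1) +
    (∑ u : X.G.V, ((if u = v then X.w u - 1 else X.w u : ℕ) : ℤ)) = _
  rw [hsum, card_addLoop_E, genus, Multigraph.b1]
  push_cast
  ring

theorem Stable.addLoop {X : WeightedGraph} (hX : X.Stable) {v : X.G.V} (hv : 0 < X.w v)
    (hlarge : 3 < X.G.val v + 3 * X.w v) : (X.addLoop v).Stable := by
  obtain ⟨⟨hne, hconn⟩, hgenus, hval⟩ := hX
  refine ⟨⟨hne, fun a b => ?_⟩, by rwa [genus_addLoop X v hv], fun u hu => ?_⟩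
  · refine Relation.ReflTransGen.mono ?_ _ _ (hconn a b)
    rintro x y ⟨e, he⟩
    exact ⟨some e, he⟩
  · rw [val_addLoop]
    change (if u = v then X.w u - 1 else X.w u) = 0 at hu
    by_cases h : v = u
    · rw [if_pos h.symm] at hu
      rw [if_pos h, ← h]
      rw [← h] at hu
      omega
    · rw [if_neg (Ne.symm h)] at hu
      exact (hval u hu).trans (Nat.le_add_right _ _)

/-- Split `v`: the half-edges in `H` are moved to a new vertex `none` of weight zero, which is
joined to `v` by a new edge. -/
abbrev splitVertex (X : WeightedGraph) (v : X.G.V) (H : Finset (X.G.E ⊕ X.G.E)) : WeightedGraph where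
  G := { V := Option X.G.V
         E := Option X.G.E
         s := fun e => e.elim (some v) fun e => if Sum.inl e ∈ H then none else some (X.G.s e)
         t := fun e => e.elim none fun e => if Sum.inr e ∈ H then none else some (X.G.t e) }
  w := fun u => u.elim 0 X.w

theorem card_splitVertex_E (X : WeightedGraph) (v : X.G.V) (H : Finset (X.G.E ⊕ X.G.E)) :
    Fintype.card (X.splitVertex v H).G.E = Fintype.card X.G.E + 1 :=
  Fintype.card_option

theorem genus_splitVertex (X : WeightedGraph) (v : X.G.V) (H : Finset (X.G.E ⊕ X.G.E)) :
    (X.splitVertex v H).genus = X.genus := by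
  change ((Fintype.card (Option X.G.E) : ℤ) - Fintype.card (Option X.G.V) + 1) +
    (∑ u : Option X.G.V, ((u.elim 0 X.w : ℕ) : ℤ)) = _
  rw [Fintype.card_option, Fintype.card_option, Fintype.sum_option, genus, Multigraph.b1]
  simp

theorem val_splitVertex_none (X : WeightedGraph) (v : X.G.V) (H : Finset (X.G.E ⊕ X.G.E)) :
    (X.splitVertex v H).G.val none = H.card + 1 := by
  have hH : H.card = (Finset.univ.filter fun h => h ∈ H).card := by simp
  refine (Multigraph.val_option _ _ _ _ _).trans ?_
  rw [hH, Finset.card_filter, Fintype.sum_sum_type]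
  simp only [ite_eq_left_iff, reduceCtorEq, imp_false, not_not, if_true, if_false, zero_add]

theorem val_splitVertex_some (X : WeightedGraph) (v u : X.G.V) (H : Finset (X.G.E ⊕ X.G.E)) :
    (X.splitVertex v H).G.val (some u) =
      ((Finset.univ.filter fun h => X.G.halfEnd h = u) \ H).card + if v = u then 1 else 0 := by
  have hH : (Finset.univ.filter fun h => X.G.halfEnd h = u) \ H =
      Finset.univ.filter fun h => h ∉ H ∧ X.G.halfEnd h = u := by
    ext h
    simp [and_comm]
  have hite : ∀ (P : Prop) [Decidable P] (x : X.G.V),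
      (if (if P then none else some x) = some u then 1 else 0) =
        if ¬ P ∧ x = u then 1 else 0 := by
    intro P _ x
    by_cases hP : P <;> simp [hP]
  refine (Multigraph.val_option _ _ _ _ _).trans ?_
  rw [hH, Finset.card_filter, Fintype.sum_sum_type]
  simp only [hite, Option.some.injEq, reduceCtorEq, if_false, add_zero, Multigraph.halfEnd,
    Sum.elim_inl, Sum.elim_inr]
  congr!

section Split

variable {X : WeightedGraph} {v : X.G.V} {H : Finset (X.G.E ⊕ X.G.E)}

theorem splitVertex_contractStep (hH : ∀ h ∈ H, X.G.halfEnd h = v) :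
    (X.splitVertex v H).ContractStep X := by
  refine contractStep_of_collapse (X := X) (Y := X.splitVertex v H) none
    (fun a => Option.elim a v id) (fun u => ⟨some u, rfl⟩) ?_ rfl (optionNeNoneEquiv X.G.E)
    ?_ ?_ ?_
  · rintro (_ | a) (_ | b) h
    · exact Or.inl rfl
    · exact Or.inr (Or.inr ⟨congrArg some h.symm, rfl⟩)
    · exact Or.inr (Or.inl ⟨congrArg some h, rfl⟩)
    · exact Or.inl (congrArg some h)
  · rintro ⟨_ | e, he⟩
    · exact absurd rfl he
    · change X.G.s e = Option.elim (if Sum.inl e ∈ H then none else some (X.G.s e)) v id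
      split_ifs with h
      · exact hH _ h
      · rfl
  · rintro ⟨_ | e, he⟩
    · exact absurd rfl he
    · change X.G.t e = Option.elim (if Sum.inr e ∈ H then none else some (X.G.t e)) v id
      split_ifs with h
      · exact hH _ h
      · rfl
  · intro u
    have hsum : ∑ a ∈ Finset.univ.filter (fun a : Option X.G.V => a.elim v id = u),
        a.elim 0 X.w = X.w u :=
      calc
        _ = (if v = u then 0 else 0) + ∑ a, if a = u then X.w a else 0 := by
          rw [Finset.sum_filter, Fintype.sum_option]
          rfl
        _ = X.w u := by simp
    refine hsum.symm.trans (Nat.add_zero _).symm |>.trans ?_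
    rw [if_neg fun h => Option.some_ne_none v h.1]

theorem connected_splitVertex (hX : X.G.Connected) (hH : ∀ h ∈ H, X.G.halfEnd h = v) :
    (X.splitVertex v H).G.Connected := by
  have hnew : (X.splitVertex v H).G.Adj (some v) none := ⟨none, Or.inl ⟨rfl, rfl⟩⟩
  have hlift : ∀ (P : Prop) [Decidable P] (u : X.G.V), (P → u = v) →
      Relation.ReflTransGen (X.splitVertex v H).G.Adj (some u) (if P then none else some u : Option X.G.V) := by
    intro P _ u hu
    split_ifs with h
    · rw [hu h]
      exact .single hnew
    · exact .refl
  have hsymm : Std.Symm (Relation.ReflTransGen (X.splitVertex v H).G.Adj) :=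
    @Relation.ReflTransGen.stdSymm _ _ ⟨fun _ _ h => h.symm⟩
  have hedge : ∀ e : X.G.E, Relation.ReflTransGen (X.splitVertex v H).G.Adj
      (some (X.G.s e)) (some (X.G.t e)) := fun e =>
    ((hlift (Sum.inl e ∈ H) (X.G.s e) (hH _)).tail ⟨some e, Or.inl ⟨rfl, rfl⟩⟩).trans
      (hsymm.symm _ _ (hlift (Sum.inr e ∈ H) (X.G.t e) (hH _)))
  have hsome : ∀ a b : X.G.V,
      Relation.ReflTransGen (X.splitVertex v H).G.Adj (some a) (some b) := by
    intro a b
    induction hX.2 a b with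
    | refl => exact .refl
    | tail _ h ih =>
      obtain ⟨e, ⟨rfl, rfl⟩ | ⟨rfl, rfl⟩⟩ := h
      · exact ih.trans (hedge e)
      · exact ih.trans (hsymm.symm _ _ (hedge e))
  refine ⟨⟨none⟩, ?_⟩
  rintro (_ | a) (_ | b)
  · exact .refl
  · exact (hsome v b).head hnew.symm
  · exact (hsome a v).tail hnew
  · exact hsome a b

theorem Stable.splitVertex (hX : X.Stable) (hH : ∀ h ∈ H, X.G.halfEnd h = v)
    (hcard : H.card = 2) (hv : 4 ≤ X.G.val v) : (X.splitVertex v H).Stable := by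
  refine ⟨connected_splitVertex hX.1 hH, by rw [genus_splitVertex]; exact hX.2.1, ?_⟩
  rintro (_ | u) hu
  · exact (val_splitVertex_none X v H).trans (by rw [hcard]) |>.ge
  · refine le_of_le_of_eq ?_ (val_splitVertex_some X v u H).symm
    by_cases h : v = u
    · subst h
      have := Finset.le_card_sdiff H (Finset.univ.filter fun h => X.G.halfEnd h = v)
      rw [← Multigraph.val_eq_card_halfEnd] at this
      rw [if_pos rfl]
      omega
    · rw [Finset.sdiff_eq_self_of_disjoint, ← Multigraph.val_eq_card_halfEnd]
      · exact (hX.2.2 u hu).trans (Nat.le_add_right _ _)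
      · rw [Finset.disjoint_left]
        intro x hx hxH
        exact h ((hH x hxH).symm.trans (Finset.mem_filter.1 hx).2)

end Split

/-- The number of edges missing from `3g - 3`, as a sum of local contributions. -/
theorem three_mul_genus_sub (X : WeightedGraph) :
    3 * X.genus - 3 - Fintype.card X.G.E =
      ∑ v, ((X.G.val v : ℤ) + 3 * X.w v - 3) := by
  have h := congrArg (Nat.cast : ℕ → ℤ) X.G.sum_val
  push_cast at h
  rw [Finset.sum_sub_distrib, Finset.sum_add_distrib, h, ← Finset.mul_sum, genus, Multigraph.b1]
  simp only [Finset.sum_const, Finset.card_univ, nsmul_eq_mul]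
  ring

theorem Stable.three_le {X : WeightedGraph} (hX : X.Stable) (v : X.G.V) :
    3 ≤ X.G.val v + 3 * X.w v := by
  rcases Nat.eq_zero_or_pos (X.w v) with h | h
  · exact (hX.2.2 v h).trans (Nat.le_add_right _ _)
  · omega

theorem Stable.card_le {X : WeightedGraph} (hX : X.Stable) :
    (Fintype.card X.G.E : ℤ) ≤ 3 * X.genus - 3 := by
  have h : 0 ≤ ∑ v, ((X.G.val v : ℤ) + 3 * X.w v - 3) :=
    Finset.sum_nonneg fun v _ => by have := hX.three_le v; omega
  rw [← three_mul_genus_sub] at h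
  omega

/-- A stable graph with fewer than `3g - 3` edges is a single edge contraction of a stable graph
of the same genus. -/
theorem Stable.exists_contractStep {X : WeightedGraph} (hX : X.Stable)
    (hlt : (Fintype.card X.G.E : ℤ) < 3 * X.genus - 3) :
    ∃ Y : WeightedGraph, Y.Stable ∧ Y.genus = X.genus ∧
      Fintype.card Y.G.E = Fintype.card X.G.E + 1 ∧ Y.ContractStep X := by
  obtain ⟨v, hv⟩ : ∃ v, 3 < X.G.val v + 3 * X.w v := by
    by_contra! hle
    have h : ∑ v, ((X.G.val v : ℤ) + 3 * X.w v - 3) ≤ 0 :=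
      Finset.sum_nonpos fun v _ => by have := hle v; omega
    rw [← three_mul_genus_sub] at h
    omega
  rcases Nat.eq_zero_or_pos (X.w v) with h | h
  · have hval : 4 ≤ X.G.val v := by omega
    obtain ⟨H, hsub, hcard⟩ := Finset.exists_subset_card_eq
      (s := Finset.univ.filter fun x => X.G.halfEnd x = v) (n := 2)
      (by rw [← Multigraph.val_eq_card_halfEnd]; omega)
    have hH : ∀ x ∈ H, X.G.halfEnd x = v := fun x hx => (Finset.mem_filter.1 (hsub hx)).2
    exact ⟨X.splitVertex v H, hX.splitVertex hH hcard hval, genus_splitVertex X v H,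
      card_splitVertex_E X v H, splitVertex_contractStep hH⟩
  · exact ⟨X.addLoop v, hX.addLoop h hv, genus_addLoop X v h, card_addLoop_E X v,
      addLoop_contractStep X v h⟩

end WeightedGraph

/-- Every stable weighted graph of genus `g ≥ 2` is obtained from some
stable weighted graph of genus `g` with exactly `3g - 3` edges by a weighted
contraction, i.e. by contracting finitely many edges. -/
theorem exists_maximal_stable_contraction (X : WeightedGraph) (g : ℤ) (hg : 2 ≤ g)
    (hX : X.Stable) (hgen : X.genus = g) :
    ∃ X' : WeightedGraph, X'.Stable ∧ X'.genus = g ∧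
      (Fintype.card X'.G.E : ℤ) = 3 * g - 3 ∧ X'.ContractsTo X := by
  obtain ⟨n, hn⟩ := Int.eq_ofNat_of_zero_le (sub_nonneg.2 hX.card_le)
  induction n generalizing X with
  | zero => exact ⟨X, hX, hgen, by push_cast at hn; omega, .refl⟩
  | succ n ih =>
    obtain ⟨Y, hY, hYgen, hYcard, hstep⟩ :=
      hX.exists_contractStep (by push_cast at hn; omega)
    obtain ⟨X', hX', hgen', hcard', hcon⟩ :=
      ih Y hY (hYgen.trans hgen) (by rw [hYgen, hYcard]; push_cast at hn ⊢; omega)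
    exact ⟨X', hX', hgen', hcard', hcon.tail hstep⟩
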